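/- Suppose 2 ≤ k ≤ n are integers with n odd, and f : V(C_n) → {1,...,k} is a k-color weak maximizer of the Wiener index W on C_n. Then W(f) = min{ W(f') : f' a k-color weak maximizer of W on C_n } if and only if the numbers of vertices in any two color classes of f differ by at most one. -/

import Mathlib

open SimpleGraph Finset

/-- The cycle graph on vertex set `ZMod n`, with an edge between `i` and `i+1` (mod `n`). -/
def cycleGraphZMod (n : ℕ) : SimpleGraph (ZMod n) :=
  SimpleGraph.fromRel (fun u v => v = u + 1)

/-- The Wiener index of a set of vertices: the sum of all pairwise geodesic distances. -/
noncomputable def wienerSet {V : Type*} [Fintype V] [DecidableEq V]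
    (G : SimpleGraph V) (A : Finset V) : ℕ :=
  (∑ p ∈ A.offDiag, G.dist p.1 p.2) / 2

/-- `A` is a maximizer of `W` on `G`. -/
def IsWienerMaximizer {V : Type*} [Fintype V] [DecidableEq V]
    (G : SimpleGraph V) (A : Finset V) : Prop :=
  ∀ B : Finset V, B.card = A.card → wienerSet G B ≤ wienerSet G A

/-- `A ⊆ V(C_n)` is almost good. -/
def AlmostGood (n : ℕ) (A : Finset (ZMod n)) : Prop :=
  A.card = 1 ∨ A.card = n - 1 ∨
    ∃ c₁ c₂ : ((cycleGraphZMod n).induce (↑A : Set (ZMod n))).ConnectedComponent,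
      c₁ ≠ c₂ ∧ (∀ c, c = c₁ ∨ c = c₂) ∧
      (c₁.supp.ncard : ℤ) - (c₂.supp.ncard : ℤ) ≤ 1 ∧
      (c₂.supp.ncard : ℤ) - (c₁.supp.ncard : ℤ) ≤ 1

/-- `A ⊆ V(C_n)` is good: both `A` and its complement are almost good. -/
def GoodSet (n : ℕ) [NeZero n] (A : Finset (ZMod n)) : Prop :=
  AlmostGood n A ∧ AlmostGood n (Finset.univ \ A)

/-- The color class of color `i` for the coloring `f`. -/
def colorClass {V : Type*} [Fintype V] {k : ℕ} (f : V → Fin k) (i : Fin k) : Finset V :=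
  Finset.univ.filter (fun v => f v = i)

/-- The Wiener index of a coloring: the sum of the Wiener indices of its color classes. -/
noncomputable def wienerColoring {V : Type*} [Fintype V] [DecidableEq V] {k : ℕ}
    (G : SimpleGraph V) (f : V → Fin k) : ℕ :=
  ∑ i : Fin k, wienerSet G (colorClass f i)

/-- The type of a coloring, as the multiset of cardinalities of its color classes
(equality of multisets is equality of the nondecreasing rearrangements). -/
def colorType {V : Type*} [Fintype V] {k : ℕ} (f : V → Fin k) : Multiset ℕ :=
  (Finset.univ : Finset (Fin k)).val.map (fun i => (colorClass f i).card)

/-- `f` is a `k`-color weak maximizer of `W` on `G`. -/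
def IsWeakMaximizer {V : Type*} [Fintype V] [DecidableEq V] {k : ℕ}
    (G : SimpleGraph V) (f : V → Fin k) : Prop :=
  Function.Surjective f ∧ ∀ g : V → Fin k, Function.Surjective g →
    colorType g = colorType f → wienerColoring G g ≤ wienerColoring G f

/-- The coloring obtained from `f` by swapping the colors of `u` and `v`. -/
def swapColors {V α : Type*} [DecidableEq V] (f : V → α) (u v : V) : V → α :=
  f ∘ Equiv.swap u v

/-- `f` is a `k`-color local weak maximizer of `W` on `G`. -/
def IsLocalWeakMaximizer {V : Type*} [Fintype V] [DecidableEq V] {k : ℕ}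
    (G : SimpleGraph V) (f : V → Fin k) : Prop :=
  Function.Surjective f ∧ ∀ u v : V, G.Adj u v →
    wienerColoring G (swapColors f u v) ≤ wienerColoring G f

/-- The number of vertices to the left of `u` in the path that get the same color as `u`. -/
def leftCount {n k : ℕ} (f : Fin n → Fin k) (u : Fin n) : ℕ :=
  (Finset.univ.filter (fun w => w < u ∧ f w = f u)).card

/-- The number of vertices to the right of `u` in the path that get the same color as `u`. -/
def rightCount {n k : ℕ} (f : Fin n → Fin k) (u : Fin n) : ℕ :=
  (Finset.univ.filter (fun w => u < w ∧ f w = f u)).card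

/-- The sum of the `j` largest entries of a multiset of naturals. -/
def sumLargest (s : Multiset ℕ) (j : ℕ) : ℕ :=
  (((s.sort (· ≤ ·)).reverse).take j).sum

/-- `x ≺ y` : `x` is majorized by `y`. -/
def MajorizedBy (x y : Multiset ℕ) : Prop :=
  x.card = y.card ∧ x.sum = y.sum ∧ ∀ j, sumLargest x j ≤ sumLargest y j

/-- The reverse Robin Hood transfer `R_{j,j'}` applied to the (sorted) list `t`,
with `j ≤ j'` zero-indexed: subtract `1` from the `j`-th entry and add `1` to the `j'`-th
entry; the result is recorded as a multiset (i.e. up to rearrangement). -/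
def rhTransfer (t : List ℕ) (j j' : ℕ) : Multiset ℕ :=
  ↑((t.set j (t.getD j 0 - 1)).set j' ((t.set j (t.getD j 0 - 1)).getD j' 0 + 1))

/-- `t(n,k)` : the unique nondecreasing `k`-tuple of positive integers summing to `n`
whose entries pairwise differ by at most one, as a multiset. -/
def equitableType (n k : ℕ) : Multiset ℕ :=
  Multiset.replicate (k - n % k) (n / k) + Multiset.replicate (n % k) (n / k + 1)

/-- One step of the operation `R`: `s ∈ R({t})`, i.e. `s = t` or `s` is obtained from `t` by
a reverse Robin Hood transfer between two entries that are equal and even. -/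
def REstep (t s : Multiset ℕ) : Prop :=
  s = t ∨ ∃ m : ℕ, Even m ∧ 2 ≤ t.count m ∧
    s = (t - Multiset.replicate 2 m) + {m - 1, m + 1}

/-- `s ∈ R^∞({t(n,k)})`. -/
def InRInfty (n k : ℕ) (s : Multiset ℕ) : Prop :=
  Relation.ReflTransGen REstep (equitableType n k) s

open scoped fwdDiff

/-!
On an odd cycle `C_{2r+1}` the distance of `u` and `v` is the number of arcs of `r` vertices that
contain `u` but not `v`. Hence twice the Wiener index of an `m`-set `A` is the sum of `a (m - a)`
over all arcs, where `a` is the number of points of `A` in the arc. The total of the numbers `a` is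
`r m`, so bounding `a (m - a)` by a secant line at the two integers nearest `m / 2` yields a bound
`maxWiener r m` on the Wiener index.

Since `2 r = -1` in `ℤ / (2 r + 1)`, multiplication by `r` maps arcs to pairs of nearly antipodal
arcs, and these attain the bound. The image of a partition of the cycle into arcs of any prescribed
sizes therefore maximizes all color classes simultaneously, and a weak maximizer with class sizes
`m i` has Wiener index `∑ i, maxWiener r (m i)`. As `maxWiener r` is strictly convex, this sum is
minimal exactly for equitable sizes.
-/

section Convexity

/-- The Robin Hood transfer, which moves one unit from the part `a i` to the part `a j`. -/
def robinHood {ι : Type*} [DecidableEq ι] (a : ι → ℕ) (i j : ι) : ι → ℕ :=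
  Function.update (Function.update a i (a i - 1)) j (a j + 1)

variable {ι : Type*} [Fintype ι] {a b : ι → ℕ} {l u : ℕ}

lemma sum_robinHood {M : Type*} [AddCommGroup M] [DecidableEq ι] (φ : ℕ → M) {i j : ι}
    (hij : i ≠ j) (hi : 0 < a i) :
    ∑ p, φ (robinHood a i j p) = ∑ p, φ (a p) + (Δ_[1] φ (a j) - Δ_[1] φ (a i - 1)) := by
  have hdiff : ∑ p, (φ (robinHood a i j p) - φ (a p))
      = (φ (a i - 1) - φ (a i)) + (φ (a j + 1) - φ (a j)) := by
    rw [Fintype.sum_eq_add i j hij fun p hp => by simp [robinHood, hp.1, hp.2]]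
    simp [robinHood, hij]
  rw [sum_sub_distrib, sub_eq_iff_eq_add'] at hdiff
  rw [hdiff, fwdDiff, fwdDiff, Nat.sub_add_cancel hi]
  abel

lemma exists_sum_lt_of_add_one_lt {M : Type*} [AddCommGroup M] [PartialOrder M]
    [IsOrderedAddMonoid M] {φ : ℕ → M} (hφ : StrictMonoOn (Δ_[1] φ) (Set.Ico l u))
    (ha : ∀ p, a p ∈ Set.Icc l u) {i j : ι} (hij : a j + 1 < a i) :
    ∃ b : ι → ℕ, (∀ p, b p ∈ Set.Icc l u) ∧ ∑ p, b p = ∑ p, a p ∧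
      ∑ p, φ (b p) < ∑ p, φ (a p) := by
  classical
  have hne : i ≠ j := by rintro rfl; omega
  have hi := (ha i).2
  have hj := (ha j).1
  have hsum := sum_robinHood (Nat.cast : ℕ → ℤ) hne (a := a) (by omega)
  have hlt : Δ_[1] φ (a j) < Δ_[1] φ (a i - 1) :=
    hφ ⟨hj, by omega⟩ ⟨by omega, by omega⟩ (by omega)
  refine ⟨robinHood a i j, fun p => ?_, ?_, ?_⟩
  · have hp := ha p
    simp only [robinHood, Function.update_apply, Set.mem_Icc] at hp ⊢
    split_ifs <;> omega
  · simp only [fwdDiff, Nat.cast_add, add_sub_cancel_left, sub_self, add_zero] at hsum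
    exact_mod_cast hsum
  · rw [sum_robinHood φ hne (by omega)]
    exact add_lt_of_neg_right _ (sub_neg.mpr hlt)

variable {R : Type*} [CommRing R] [LinearOrder R] [IsStrictOrderedRing R] {φ : ℕ → R}

lemma secant_le_of_monotoneOn_fwdDiff (hφ : MonotoneOn (Δ_[1] φ) (Set.Ico l u)) {q x : ℕ}
    (hq : q ∈ Set.Ico l u) (hx : x ∈ Set.Icc l u) :
    φ q + (x - q) * Δ_[1] φ q ≤ φ x := by
  obtain ⟨hlx, hxu⟩ := hx
  rcases le_total q x with h | h
  · induction x, h using Nat.le_induction with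
    | base => rw [sub_self, zero_mul, add_zero]
    | succ x h ih =>
      have hslope : φ (q + 1) - φ q ≤ φ (x + 1) - φ x := hφ hq ⟨hq.1.trans h, hxu⟩ h
      have := ih (hq.1.trans h) (by omega)
      rw [fwdDiff] at this ⊢
      push_cast
      linarith
  · induction h using Nat.decreasingInduction with
    | self => rw [sub_self, zero_mul, add_zero]
    | of_succ x h ih =>
      have hslope : φ (x + 1) - φ x ≤ φ (q + 1) - φ q := hφ ⟨hlx, h.trans hq.2⟩ hq h.le
      have := ih (by omega) (h.trans_le hq.2.le)
      rw [fwdDiff] at this ⊢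
      push_cast at this
      linarith

lemma sum_le_sum_of_equitable (hφ : MonotoneOn (Δ_[1] φ) (Set.Ico l u))
    (ha : ∀ i, a i ∈ Set.Icc l u) (hb : ∀ i, b i ∈ Set.Icc l u) (hsum : ∑ i, b i = ∑ i, a i)
    (heq : ∀ i j, a i ≤ a j + 1) : ∑ i, φ (a i) ≤ ∑ i, φ (b i) := by
  cases isEmpty_or_nonempty ι
  · simp
  obtain ⟨i₀, hmin⟩ := Finite.exists_min a
  rcases (ha i₀).2.eq_or_lt with hu | hu
  · have hle (i : ι) : b i ≤ a i := (hb i).2.trans (hu ▸ hmin i)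
    have hab := (sum_eq_sum_iff_of_le fun i _ => hle i).mp hsum
    exact (sum_congr rfl fun i hi => by rw [hab i hi]).le
  · have hsecant (i : ι) : φ (a i) = φ (a i₀) + (a i - a i₀) * Δ_[1] φ (a i₀) := by
      rcases (hmin i).eq_or_lt with h | h
      · rw [h, sub_self, zero_mul, add_zero]
      · rw [show a i = a i₀ + 1 from (heq i i₀).antisymm h, fwdDiff]
        push_cast
        ring
    have hsumR : ∑ i, (b i : R) = ∑ i, (a i : R) := mod_cast hsum
    calc ∑ i, φ (a i) = ∑ i, (φ (a i₀) + (b i - a i₀) * Δ_[1] φ (a i₀)) := by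
          rw [sum_congr rfl fun i _ => hsecant i]
          simp only [sum_add_distrib, ← sum_mul, sum_sub_distrib, hsumR]
      _ ≤ ∑ i, φ (b i) :=
          sum_le_sum fun i _ => secant_le_of_monotoneOn_fwdDiff hφ ⟨(ha i₀).1, hu⟩ (hb i)

theorem forall_sum_le_iff_equitable (hφ : StrictMonoOn (Δ_[1] φ) (Set.Ico l u))
    (ha : ∀ i, a i ∈ Set.Icc l u) :
    (∀ b : ι → ℕ, (∀ i, b i ∈ Set.Icc l u) → ∑ i, b i = ∑ i, a i →
        ∑ i, φ (a i) ≤ ∑ i, φ (b i))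
      ↔ ∀ i j, a i ≤ a j + 1 := by
  refine ⟨fun hmin i j => ?_, fun heq b hb hsum =>
    sum_le_sum_of_equitable hφ.monotoneOn ha hb hsum heq⟩
  by_contra! hij
  obtain ⟨b, hb, hsum, hlt⟩ := exists_sum_lt_of_add_one_lt hφ ha hij
  exact (hmin b hb hsum).not_gt hlt

end Convexity

section Distance

variable {n : ℕ}

lemma cycleGraphZMod_adj {u v : ZMod n} :
    (cycleGraphZMod n).Adj u v ↔ u ≠ v ∧ (v = u + 1 ∨ u = v + 1) := by
  simp [cycleGraphZMod, SimpleGraph.fromRel_adj]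

lemma cycleGraphZMod_edist_add_natCast_le (u : ZMod n) (m : ℕ) :
    (cycleGraphZMod n).edist u (u + m) ≤ m := by
  induction m with
  | zero => simp
  | succ m ih =>
    have hstep : (cycleGraphZMod n).edist (u + m) (u + (m + 1 : ℕ)) ≤ 1 := by
      rw [edist_le_one_iff_adj_or_eq, cycleGraphZMod_adj, Nat.cast_succ, ← add_assoc]
      tauto
    exact_mod_cast SimpleGraph.edist_triangle.trans (add_le_add ih hstep)

lemma natAbs_valMinAbs_one_le : (1 : ZMod n).valMinAbs.natAbs ≤ 1 := by
  rcases n with _ | n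
  · rfl
  · exact ZMod.natAbs_min_of_le_div_two (n + 1) _ 1 (by simp) (ZMod.natAbs_valMinAbs_le _)

lemma natAbs_valMinAbs_sub_le_length {u v : ZMod n} (p : (cycleGraphZMod n).Walk u v) :
    (u - v).valMinAbs.natAbs ≤ p.length := by
  induction p with
  | nil => simp
  | @cons u w v h p ih =>
    have hstep : (u - w).valMinAbs.natAbs ≤ 1 := by
      rcases (cycleGraphZMod_adj.mp h).2 with rfl | rfl
      · rw [← ZMod.natAbs_valMinAbs_neg]
        simpa using natAbs_valMinAbs_one_le
      · simpa using natAbs_valMinAbs_one_le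
    calc (u - v).valMinAbs.natAbs = ((u - w) + (w - v)).valMinAbs.natAbs := by
          rw [sub_add_sub_cancel]
      _ ≤ ((u - w).valMinAbs + (w - v).valMinAbs).natAbs := ZMod.natAbs_valMinAbs_add_le _ _
      _ ≤ (u - w).valMinAbs.natAbs + (w - v).valMinAbs.natAbs := Int.natAbs_add_le _ _
      _ ≤ 1 + p.length := add_le_add hstep ih
      _ = (Walk.cons h p).length := by rw [Walk.length_cons, add_comm]

lemma cycleGraphZMod_edist (u v : ZMod n) :
    (cycleGraphZMod n).edist u v = (u - v).valMinAbs.natAbs := by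
  refine le_antisymm ?_ (le_iInf fun p => mod_cast natAbs_valMinAbs_sub_le_length p)
  have hcast := ZMod.coe_valMinAbs (u - v)
  rcases Int.natAbs_eq (u - v).valMinAbs with h | h <;>
    rw [h] at hcast <;> simp only [Int.cast_neg, Int.cast_natCast] at hcast
  · have hvu : v + ((u - v).valMinAbs.natAbs : ZMod n) = u := by linear_combination hcast
    simpa only [hvu, SimpleGraph.edist_comm] using
      cycleGraphZMod_edist_add_natCast_le v (u - v).valMinAbs.natAbs
  · have huv : u + ((u - v).valMinAbs.natAbs : ZMod n) = v := by linear_combination -hcast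
    simpa only [huv] using cycleGraphZMod_edist_add_natCast_le u (u - v).valMinAbs.natAbs

lemma cycleGraphZMod_dist (u v : ZMod n) :
    (cycleGraphZMod n).dist u v = (u - v).valMinAbs.natAbs := by
  rw [SimpleGraph.dist, cycleGraphZMod_edist, ENat.toNat_natCast]

end Distance

lemma wienerSet_eq_sum_sum_div_two {V : Type*} [Fintype V] [DecidableEq V] (G : SimpleGraph V)
    (A : Finset V) : wienerSet G A = (∑ u ∈ A, ∑ v ∈ A, G.dist u v) / 2 := by
  rw [wienerSet, ← sum_product', ← diag_union_offDiag, sum_union (disjoint_diag_offDiag A),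
    sum_diag]
  simp

section Arcs

variable {n ℓ : ℕ} [NeZero n]

/-- The arc of `ℓ` consecutive vertices `i, i + 1, …, i + ℓ - 1` of the cycle. -/
def arc (ℓ : ℕ) (i : ZMod n) : Finset (ZMod n) :=
  univ.filter fun x => (x - i).val < ℓ

lemma mem_arc {i x : ZMod n} : x ∈ arc ℓ i ↔ (x - i).val < ℓ := by
  simp [arc]

lemma sum_filter_val_mem {M : Type*} [AddCommMonoid M] {s : Finset ℕ} (hs : s ⊆ range n)
    (F : ZMod n → M) : ∑ x with x.val ∈ s, F x = ∑ t ∈ s, F t := by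
  have hval {t : ℕ} (ht : t ∈ s) : (t : ZMod n).val = t :=
    ZMod.val_natCast_of_lt (mem_range.mp (hs ht))
  refine sum_nbij' ZMod.val Nat.cast ?_ ?_ ?_ ?_ ?_ <;> simp +contextual [hval]

lemma card_filter_val_mem {s : Finset ℕ} (hs : s ⊆ range n) :
    #{x : ZMod n | x.val ∈ s} = #s := by
  simpa only [card_eq_sum_ones] using sum_filter_val_mem hs fun _ => 1

lemma sum_arc {M : Type*} [AddCommMonoid M] (hℓ : ℓ ≤ n) (i : ZMod n) (F : ZMod n → M) :
    ∑ x ∈ arc ℓ i, F x = ∑ t ∈ range ℓ, F (t + i) := by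
  rw [← sum_filter_val_mem (range_subset_range.mpr hℓ) fun x => F (x + i)]
  exact sum_equiv (Equiv.subRight i) (by simp [mem_arc]) (by simp)

lemma card_arc (hℓ : ℓ ≤ n) (i : ZMod n) : #(arc ℓ i) = ℓ := by
  rw [card_eq_sum_ones, sum_arc hℓ, ← card_eq_sum_ones, card_range]

lemma card_filter_mem_arc (hℓ : ℓ ≤ n) (x : ZMod n) : #{i | x ∈ arc ℓ i} = ℓ := by
  have hreflect : #{i | x ∈ arc ℓ i} = #(arc ℓ (0 : ZMod n)) :=
    card_equiv (Equiv.subLeft x) (by simp [mem_arc])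
  rw [hreflect, card_arc hℓ]

lemma cycleGraphZMod_dist_eq_card_separating_arc (u v : ZMod n) :
    (cycleGraphZMod n).dist u v = #{i | u ∈ arc (n / 2) i ∧ v ∉ arc (n / 2) i} := by
  have hc := ZMod.val_lt (v - u)
  rw [cycleGraphZMod_dist, ← ZMod.natAbs_valMinAbs_neg, neg_sub, ZMod.valMinAbs_natAbs_eq_min]
  set c := (v - u).val
  have hstart (i : ZMod n) : u ∈ arc (n / 2) i ∧ v ∉ arc (n / 2) i
      ↔ (u - i).val ∈ Ico (n / 2 - c) (min (n / 2) (n - c)) := by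
    have hui := ZMod.val_lt (u - i)
    rw [mem_arc, mem_arc, mem_Ico, ← sub_add_sub_cancel' u i v, ZMod.val_add, Nat.add_mod_eq_ite,
      Nat.mod_eq_of_lt hui, Nat.mod_eq_of_lt hc]
    split_ifs <;> omega
  have hsub : Ico (n / 2 - c) (min (n / 2) (n - c)) ⊆ range n := fun t ht => by
    simp only [mem_Ico, mem_range] at ht ⊢
    omega
  simp_rw [hstart]
  rw [card_equiv (Equiv.subLeft u) (t := {x | x.val ∈ Ico (n / 2 - c) (min (n / 2) (n - c))})
    (by simp), card_filter_val_mem hsub, Nat.card_Ico]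
  omega

lemma sum_card_inter_arc (hℓ : ℓ ≤ n) (A : Finset (ZMod n)) :
    ∑ i, #{x ∈ A | x ∈ arc ℓ i} = ℓ * #A := by
  have h := sum_card_bipartiteAbove_eq_sum_card_bipartiteBelow (s := A) (t := univ)
    fun x i => x ∈ arc ℓ i
  simp only [bipartiteAbove, bipartiteBelow, card_filter_mem_arc hℓ] at h
  rw [← h, sum_const, smul_eq_mul, mul_comm]

lemma sum_dist_eq_sum_arc (A : Finset (ZMod n)) :
    ∑ u ∈ A, ∑ v ∈ A, (cycleGraphZMod n).dist u v
      = ∑ i, #{x ∈ A | x ∈ arc (n / 2) i} * #{x ∈ A | x ∉ arc (n / 2) i} := by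
  calc ∑ u ∈ A, ∑ v ∈ A, (cycleGraphZMod n).dist u v
      = ∑ p ∈ A ×ˢ A, #{i | p.1 ∈ arc (n / 2) i ∧ p.2 ∉ arc (n / 2) i} := by
        simp only [cycleGraphZMod_dist_eq_card_separating_arc, sum_product]
    _ = ∑ i, #{p ∈ A ×ˢ A | p.1 ∈ arc (n / 2) i ∧ p.2 ∉ arc (n / 2) i} :=
        sum_card_bipartiteAbove_eq_sum_card_bipartiteBelow _
    _ = ∑ i, #{x ∈ A | x ∈ arc (n / 2) i} * #{x ∈ A | x ∉ arc (n / 2) i} :=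
        sum_congr rfl fun i _ => by rw [← card_product, ← filter_product]

lemma mul_sub_le_secant (a m q : ℤ) : a * (m - a) ≤ q * (m - q) + (a - q) * (m - 2 * q - 1) := by
  linarith [Int.le_self_sq (a - q)]

lemma sum_dist_le (A : Finset (ZMod n)) (q : ℤ) :
    (∑ u ∈ A, ∑ v ∈ A, ((cycleGraphZMod n).dist u v : ℤ))
      ≤ n * (q * (#A - q)) + ((n / 2 : ℕ) * #A - n * q) * (#A - 2 * q - 1) := by
  have hcompl (i : ZMod n) :
      (#{x ∈ A | x ∉ arc (n / 2) i} : ℤ) = #A - #{x ∈ A | x ∈ arc (n / 2) i} := by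
    rw [eq_sub_iff_add_eq', ← card_filter_add_card_filter_not (s := A) (· ∈ arc (n / 2) i)]
    push_cast
    rfl
  have hsum : ∑ i, (#{x ∈ A | x ∈ arc (n / 2) i} : ℤ) = (n / 2 : ℕ) * #A := by
    exact_mod_cast sum_card_inter_arc (Nat.div_le_self n 2) A
  calc (∑ u ∈ A, ∑ v ∈ A, ((cycleGraphZMod n).dist u v : ℤ))
      = ∑ i, (#{x ∈ A | x ∈ arc (n / 2) i} : ℤ) * #{x ∈ A | x ∉ arc (n / 2) i} := by
        exact_mod_cast sum_dist_eq_sum_arc A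
    _ ≤ ∑ i, (q * (#A - q) + (#{x ∈ A | x ∈ arc (n / 2) i} - q) * (#A - 2 * q - 1)) :=
        sum_le_sum fun i _ => by rw [hcompl i]; exact mul_sub_le_secant _ _ _
    _ = _ := by
        simp only [sum_add_distrib, ← sum_mul, sum_sub_distrib, hsum, sum_const, card_univ,
          ZMod.card, nsmul_eq_mul]
        ring

end Arcs

/-- The maximal Wiener index of a set of `m` vertices of `C_{2r+1}`. It is attained by two nearly
antipodal arcs of `⌊m/2⌋` and `⌈m/2⌉` vertices. -/
def maxWiener (r m : ℕ) : ℕ :=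
  r * (m / 2 * ((m + 1) / 2)) + ((m + 1) / 2).choose 2

section MaxWiener

variable (r j : ℕ)

lemma two_mul_choose_two : (2 * j.choose 2 : ℤ) = j * (j - 1) := by
  induction j with
  | zero => simp
  | succ j ih =>
    rw [Nat.choose_succ_succ', Nat.choose_one_right]
    push_cast
    linarith

lemma two_mul_maxWiener_two_mul :
    (2 * maxWiener r (2 * j) : ℤ) = (2 * r + 1) * j ^ 2 - j := by
  have hfloor : 2 * j / 2 = j := by omega
  have hceil : (2 * j + 1) / 2 = j := by omega
  rw [maxWiener, hfloor, hceil]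
  push_cast
  linarith [two_mul_choose_two j]

lemma two_mul_maxWiener_two_mul_add_one :
    (2 * maxWiener r (2 * j + 1) : ℤ) = (2 * r + 1) * (j * (j + 1)) := by
  have hfloor : (2 * j + 1) / 2 = j := by omega
  have hceil : (2 * j + 1 + 1) / 2 = j + 1 := by omega
  have hchoose := two_mul_choose_two (j + 1)
  rw [maxWiener, hfloor, hceil]
  push_cast at hchoose ⊢
  linarith

lemma fwdDiff_maxWiener_two_mul :
    Δ_[1] (fun m => (maxWiener r m : ℤ)) (2 * j) = j * (r + 1) := by
  rw [fwdDiff]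
  linarith [two_mul_maxWiener_two_mul r j, two_mul_maxWiener_two_mul_add_one r j]

lemma fwdDiff_maxWiener_two_mul_add_one :
    Δ_[1] (fun m => (maxWiener r m : ℤ)) (2 * j + 1) = (j + 1) * r := by
  have h := two_mul_maxWiener_two_mul r (j + 1)
  rw [mul_add_one] at h
  push_cast at h
  rw [fwdDiff]
  linarith [two_mul_maxWiener_two_mul_add_one r j]

lemma strictMonoOn_fwdDiff_maxWiener :
    StrictMonoOn (Δ_[1] fun m => (maxWiener r m : ℤ)) (Set.Iio (2 * r + 1)) := by
  refine strictMonoOn_of_lt_add_one Set.ordConnected_Iio fun i _ _ hi => ?_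
  rw [Set.mem_Iio] at hi
  obtain ⟨j, rfl | rfl⟩ := Nat.even_or_odd' i
  · rw [fwdDiff_maxWiener_two_mul, fwdDiff_maxWiener_two_mul_add_one]
    have : (j : ℤ) < r := by omega
    linarith
  · rw [fwdDiff_maxWiener_two_mul_add_one, add_assoc, one_add_one_eq_two, ← mul_add_one,
      fwdDiff_maxWiener_two_mul]
    push_cast
    linarith

lemma wienerSet_le_maxWiener (A : Finset (ZMod (2 * r + 1))) :
    wienerSet (cycleGraphZMod (2 * r + 1)) A ≤ maxWiener r #A := by
  suffices hdist : (∑ u ∈ A, ∑ v ∈ A, ((cycleGraphZMod (2 * r + 1)).dist u v : ℤ))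
      ≤ 2 * maxWiener r #A by
    rw [wienerSet_eq_sum_sum_div_two]
    exact Nat.div_le_of_le_mul (mod_cast hdist)
  have hhalf : (2 * r + 1) / 2 = r := by omega
  -- The bound of `sum_dist_le` is sharp for `q = ⌊(#A - 1) / 2⌋`.
  obtain ⟨j, hj | hj⟩ := Nat.even_or_odd' #A
  · have h := sum_dist_le A (j - 1)
    rw [hhalf, hj] at h
    rw [hj, two_mul_maxWiener_two_mul]
    push_cast at h
    linarith
  · have h := sum_dist_le A j
    rw [hhalf, hj] at h
    rw [hj, two_mul_maxWiener_two_mul_add_one]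
    push_cast at h
    linarith

end MaxWiener

section Attained

variable {r : ℕ}

lemma two_mul_natCast_half (r : ℕ) : 2 * (r : ZMod (2 * r + 1)) = -1 := by
  rw [eq_neg_iff_add_eq_zero]
  exact_mod_cast ZMod.natCast_self (2 * r + 1)

/-- Multiplication by `r = -1/2` as a permutation of the vertices of `C_{2r+1}`. It sends `x` and
`x + 1` to vertices at distance `r`, the diameter, and `x` and `x + 2` to adjacent vertices, hence
an arc to two nearly antipodal arcs. -/
def mulHalf (r : ℕ) : Equiv.Perm (ZMod (2 * r + 1)) where
  toFun x := r * x
  invFun x := -2 * x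
  left_inv x := by linear_combination -x * two_mul_natCast_half r
  right_inv x := by linear_combination -x * two_mul_natCast_half r

lemma natAbs_valMinAbs_half_mul_two_mul {t : ℕ} (ht : t ≤ r) :
    ((r : ZMod (2 * r + 1)) * (2 * t : ℕ)).valMinAbs.natAbs = t := by
  have hneg : (r : ZMod (2 * r + 1)) * (2 * t : ℕ) = -(t : ZMod (2 * r + 1)) := by
    push_cast
    linear_combination (t : ZMod (2 * r + 1)) * two_mul_natCast_half r
  rw [hneg, ZMod.natAbs_valMinAbs_neg, ZMod.valMinAbs_natCast_of_le_half (by omega),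
    Int.natAbs_natCast]

lemma natAbs_valMinAbs_half_mul_two_mul_add_one {t : ℕ} (ht : t ≤ r) :
    ((r : ZMod (2 * r + 1)) * (2 * t + 1 : ℕ)).valMinAbs.natAbs = r - t := by
  have hsub : (r : ZMod (2 * r + 1)) * (2 * t + 1 : ℕ) = (r - t : ℕ) := by
    push_cast [Nat.cast_sub ht]
    linear_combination (t : ZMod (2 * r + 1)) * two_mul_natCast_half r
  rw [hsub, ZMod.valMinAbs_natCast_of_le_half (by omega), Int.natAbs_natCast]

lemma sum_range_natAbs_valMinAbs_half_mul {m : ℕ} (hm : m ≤ 2 * r) :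
    ∑ t ∈ range m, (((r : ZMod (2 * r + 1)) * (t + 1 : ℕ)).valMinAbs.natAbs : ℤ)
      = Δ_[1] (fun m => (maxWiener r m : ℤ)) m := by
  refine sum_range_induction _ _ (by simpa using fwdDiff_maxWiener_two_mul r 0) m fun t ht => ?_
  obtain ⟨j, rfl | rfl⟩ := Nat.even_or_odd' t
  · rw [natAbs_valMinAbs_half_mul_two_mul_add_one (by omega), fwdDiff_maxWiener_two_mul,
      fwdDiff_maxWiener_two_mul_add_one, Nat.cast_sub (by omega)]
    ring
  · rw [add_assoc, one_add_one_eq_two, ← mul_add_one, natAbs_valMinAbs_half_mul_two_mul (by omega),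
      fwdDiff_maxWiener_two_mul, fwdDiff_maxWiener_two_mul_add_one]
    push_cast
    ring

lemma sum_range_sum_range_of_symm {M : Type*} [AddCommMonoid M] {d : ℕ → ℕ → M}
    (hself : ∀ a, d a a = 0) (hsymm : ∀ a b, d a b = d b a) (m : ℕ) :
    ∑ a ∈ range m, ∑ b ∈ range m, d a b = 2 • ∑ a ∈ range m, ∑ b ∈ range a, d a b := by
  induction m with
  | zero => simp
  | succ m ih =>
    have hcol : ∑ a ∈ range m, d a m = ∑ b ∈ range m, d m b := sum_congr rfl fun a _ => hsymm a m
    simp only [sum_range_succ, sum_add_distrib, ih, hcol, hself, add_zero, smul_add, two_nsmul]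
    abel

lemma sum_range_sum_range_natAbs_valMinAbs {m : ℕ} (hm : m ≤ 2 * r + 1) :
    ∑ a ∈ range m, ∑ b ∈ range m, ((r : ZMod (2 * r + 1)) * (a - b)).valMinAbs.natAbs
      = 2 * maxWiener r m := by
  rw [sum_range_sum_range_of_symm (by simp)
    (fun a b => by rw [← ZMod.natAbs_valMinAbs_neg, ← mul_neg, neg_sub]), smul_eq_mul]
  congr 1
  refine sum_range_induction _ _ (by simp [maxWiener]) m fun a ha => ?_
  have hrow : ∑ b ∈ range a, (((r : ZMod (2 * r + 1)) * (a - b)).valMinAbs.natAbs : ℤ)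
      = Δ_[1] (fun m => (maxWiener r m : ℤ)) a := by
    rw [← sum_range_natAbs_valMinAbs_half_mul (by omega), ← sum_range_reflect]
    refine sum_congr rfl fun b hb => ?_
    have hba := mem_range.mp hb
    rw [← Nat.cast_sub (by omega), show a - (a - 1 - b) = b + 1 by omega]
  rw [fwdDiff, eq_sub_iff_add_eq'] at hrow
  exact_mod_cast hrow.symm

lemma wienerSet_map_mulHalf_arc {m : ℕ} (hm : m ≤ 2 * r + 1) (i : ZMod (2 * r + 1)) :
    wienerSet (cycleGraphZMod (2 * r + 1)) ((arc m i).map (mulHalf r).toEmbedding)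
      = maxWiener r m := by
  have hsum : ∑ u ∈ (arc m i).map (mulHalf r).toEmbedding,
      ∑ v ∈ (arc m i).map (mulHalf r).toEmbedding, (cycleGraphZMod (2 * r + 1)).dist u v
        = 2 * maxWiener r m := by
    simp only [sum_map, sum_arc hm, cycleGraphZMod_dist, ← sum_range_sum_range_natAbs_valMinAbs hm,
      Equiv.toEmbedding_apply, mulHalf, Equiv.coe_fn_mk, ← mul_sub, add_sub_add_right_eq_sub]
  rw [wienerSet_eq_sum_sum_div_two, hsum, Nat.mul_div_cancel_left _ two_pos]

end Attained

section Coloring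

variable {k : ℕ}

lemma mem_colorClass {V : Type*} [Fintype V] {f : V → Fin k} {i : Fin k} {v : V} :
    v ∈ colorClass f i ↔ f v = i := by
  simp [colorClass]

lemma sum_card_colorClass {V : Type*} [Fintype V] (f : V → Fin k) :
    ∑ i, #(colorClass f i) = Fintype.card V :=
  (card_eq_sum_card_fiberwise fun _ _ => mem_univ _).symm

lemma card_colorClass_pos {V : Type*} [Fintype V] {f : V → Fin k} {i : Fin k} :
    0 < #(colorClass f i) ↔ ∃ v, f v = i := by
  simp [card_pos, Finset.Nonempty, mem_colorClass]

lemma colorClass_comp_symm {V : Type*} [Fintype V] (f : V → Fin k) (σ : Equiv.Perm V) (i : Fin k) :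
    colorClass (f ∘ σ.symm) i = (colorClass f i).map σ.toEmbedding := by
  ext v
  simp [mem_colorClass, mem_map_equiv]

lemma sum_card_colorClass_eq_of_colorType_eq {V : Type*} [Fintype V] {f g : V → Fin k}
    (h : colorType g = colorType f) {M : Type*} [AddCommMonoid M] (φ : ℕ → M) :
    ∑ i, φ #(colorClass g i) = ∑ i, φ #(colorClass f i) := by
  have hmap := congrArg (fun s => (s.map φ).sum) h
  rwa [colorType, colorType, Multiset.map_map, Multiset.map_map] at hmap

lemma exists_colorClass_eq_arc {n : ℕ} [NeZero n] {m : Fin k → ℕ} (hm : ∑ i, m i = n) :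
    ∃ g : ZMod n → Fin k, ∀ i, ∃ s, colorClass g i = arc (m i) s := by
  let block (x : ZMod n) : Σ i, Fin (m i) :=
    finSigmaFinEquiv.symm ⟨x.val, by rw [hm]; exact ZMod.val_lt x⟩
  have hblock (x : ZMod n) (p : Σ i, Fin (m i)) : block x = p ↔ x = (finSigmaFinEquiv p : ℕ) := by
    rw [Equiv.symm_apply_eq, Fin.ext_iff]
    constructor
    · exact fun h => by rw [← h, ZMod.natCast_zmod_val]
    · rintro rfl
      exact ZMod.val_natCast_of_lt (hm ▸ (finSigmaFinEquiv p).isLt)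
  refine ⟨fun x => (block x).1, fun i => ⟨(∑ j : Fin i, m (Fin.castLE i.2.le j) : ℕ), ?_⟩⟩
  ext x
  rw [mem_colorClass, mem_arc]
  constructor
  · rintro rfl
    have hx := (hblock x _).mp rfl
    rw [finSigmaFinEquiv_apply, Nat.cast_add, ← sub_eq_iff_eq_add'] at hx
    rw [hx, ZMod.val_natCast]
    exact (Nat.mod_le _ _).trans_lt (block x).2.isLt
  · intro h
    have hx : block x = ⟨i, ⟨_, h⟩⟩ := by
      rw [hblock, finSigmaFinEquiv_apply, Nat.cast_add, ZMod.natCast_zmod_val, add_sub_cancel]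
    rw [hx]

end Coloring

section WeakMaximizer

variable {r k : ℕ}

lemma wienerColoring_le_sum_maxWiener (f : ZMod (2 * r + 1) → Fin k) :
    wienerColoring (cycleGraphZMod (2 * r + 1)) f ≤ ∑ i, maxWiener r #(colorClass f i) :=
  sum_le_sum fun _ _ => wienerSet_le_maxWiener r _

lemma exists_wienerColoring_eq_sum_maxWiener {m : Fin k → ℕ} (hm : ∑ i, m i = 2 * r + 1) :
    ∃ g : ZMod (2 * r + 1) → Fin k, (∀ i, #(colorClass g i) = m i) ∧
      wienerColoring (cycleGraphZMod (2 * r + 1)) g = ∑ i, maxWiener r (m i) := by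
  have hmle (i : Fin k) : m i ≤ 2 * r + 1 := hm ▸ single_le_sum_of_canonicallyOrdered (mem_univ i)
  obtain ⟨g, hg⟩ := exists_colorClass_eq_arc hm
  choose s hs using hg
  refine ⟨g ∘ (mulHalf r).symm, fun i => ?_, sum_congr rfl fun i _ => ?_⟩
  · rw [colorClass_comp_symm, card_map, hs, card_arc (hmle i)]
  · rw [colorClass_comp_symm, hs, wienerSet_map_mulHalf_arc (hmle i)]

lemma isWeakMaximizer_cycleGraphZMod_iff {f : ZMod (2 * r + 1) → Fin k} :
    IsWeakMaximizer (cycleGraphZMod (2 * r + 1)) f ↔ Function.Surjective f ∧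
      wienerColoring (cycleGraphZMod (2 * r + 1)) f = ∑ i, maxWiener r #(colorClass f i) := by
  refine and_congr_right fun hf => ⟨fun hmax => ?_, fun heq g _ hg => ?_⟩
  · obtain ⟨g, hcard, hW⟩ := exists_wienerColoring_eq_sum_maxWiener
      ((sum_card_colorClass f).trans (ZMod.card _))
    refine (wienerColoring_le_sum_maxWiener f).antisymm (hW ▸ hmax g (fun i => ?_) ?_)
    · rw [← card_colorClass_pos, hcard, card_colorClass_pos]
      exact hf i
    · simp only [colorType, hcard]
  · rw [heq, ← sum_card_colorClass_eq_of_colorType_eq hg]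
    exact wienerColoring_le_sum_maxWiener g

lemma card_colorClass_mem_Icc {f : ZMod (2 * r + 1) → Fin k} (hf : Function.Surjective f)
    (i : Fin k) : #(colorClass f i) ∈ Set.Icc 1 (2 * r + 1) :=
  ⟨card_colorClass_pos.mpr (hf i), (card_le_univ _).trans_eq (ZMod.card _)⟩

lemma forall_isWeakMaximizer_le_iff {f : ZMod (2 * r + 1) → Fin k}
    (hf : IsWeakMaximizer (cycleGraphZMod (2 * r + 1)) f) :
    (∀ g : ZMod (2 * r + 1) → Fin k, IsWeakMaximizer (cycleGraphZMod (2 * r + 1)) g →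
        wienerColoring (cycleGraphZMod (2 * r + 1)) f
          ≤ wienerColoring (cycleGraphZMod (2 * r + 1)) g)
      ↔ ∀ b : Fin k → ℕ, (∀ i, b i ∈ Set.Icc 1 (2 * r + 1)) →
          ∑ i, b i = ∑ i, #(colorClass f i) →
          ∑ i, (maxWiener r #(colorClass f i) : ℤ) ≤ ∑ i, (maxWiener r (b i) : ℤ) := by
  have hsum (g : ZMod (2 * r + 1) → Fin k) : ∑ i, #(colorClass g i) = 2 * r + 1 :=
    (sum_card_colorClass g).trans (ZMod.card _)
  rw [(isWeakMaximizer_cycleGraphZMod_iff.mp hf).2]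
  constructor
  · intro hmin b hb hbsum
    obtain ⟨g, hcard, hW⟩ := exists_wienerColoring_eq_sum_maxWiener (hbsum.trans (hsum f))
    have hg : Function.Surjective g := fun i =>
      card_colorClass_pos.mp ((hcard i).symm ▸ (hb i).1)
    have hle := hmin g (isWeakMaximizer_cycleGraphZMod_iff.mpr ⟨hg, by simp only [hW, hcard]⟩)
    rw [hW] at hle
    exact_mod_cast hle
  · intro hmin g hg
    have hg' := isWeakMaximizer_cycleGraphZMod_iff.mp hg
    rw [hg'.2]
    exact_mod_cast hmin _ (card_colorClass_mem_Icc hg'.1) ((hsum g).trans (hsum f).symm)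

end WeakMaximizer

/-- For `2 ≤ k ≤ n` with `n` odd and `f` a `k`-color weak maximizer of `W` on `C_n`:
`W(f)` is minimal among `k`-color weak maximizers iff the sizes of any two color classes
of `f` differ by at most one. -/
theorem cycle_min_odd (n k : ℕ) [NeZero n] (hk : 2 ≤ k) (hkn : k ≤ n) (hn : Odd n)
    (f : ZMod n → Fin k) (hf : IsWeakMaximizer (cycleGraphZMod n) f) :
    (∀ g : ZMod n → Fin k, IsWeakMaximizer (cycleGraphZMod n) g →
        wienerColoring (cycleGraphZMod n) f ≤ wienerColoring (cycleGraphZMod n) g)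
      ↔ ∀ i j : Fin k, (colorClass f i).card ≤ (colorClass f j).card + 1 := by
  obtain ⟨r, rfl⟩ := hn
  rw [forall_isWeakMaximizer_le_iff hf]
  exact forall_sum_le_iff_equitable
    ((strictMonoOn_fwdDiff_maxWiener r).mono fun _ hi => hi.2) (card_colorClass_mem_Icc hf.1)
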